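/- Let 0 < l ≤ R_s and let Λ(l) be the triangular lattice of side l in the plane. Every point x ∈ ℝ² lies within Euclidean distance R_s of at least k lattice points of Λ(l), where k ≥ (n(R_s) − 1)/3 + (n(√3 R_s) − n(R_s))/6, and n(R) denotes the number of points of Λ(l) contained in the closed disk of radius R centered at a lattice point. (This expresses that a lattice deployment of sensors of sensing radius R_s achieves a continuous coverage level of at least (n(R_s) − 1)/3 + (n(√3 R_s) − n(R_s))/6.) -/

import Mathlib

/-!
In the basis `u, v` the squared length of `a • u + b • v` is `3 l² (a² + ab + b²)`, so everything
becomes a count of integer points `(m, k)` with `hexForm (m - s) (k - t) ≤ ρ`, where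
`ρ = R² / (3 l²)` and `(s, t)` are the coordinates of the centre of the disk.

* Let `c = (1/3, 1/3)` be the centre of the triangle `0, u, v`. A similarity of ratio `√3` maps the
  lattice onto a sublattice of index 3; one of the two other cosets is the image of the lattice seen
  from `c`, the remaining one is its negative. Hence `n(√3 R) ≤ n(R) + 2 n_c(R)`, where `n_c(R)`
  counts the lattice points in the disk of radius `R` centred at `c` (`ncard_three_mul_le`).
  So it is enough to find `(n(R) - 1) / 3 + n_c(R) / 3` lattice points within `R` of `x`.
* By the symmetries of the lattice, `x` may be moved into the triangle with vertices `0`, `u / 2`,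
  `c`, described by `0 ≤ t ≤ s` and `2 s + t ≤ 1` (`exists_reduced`).
* The three rotations by multiples of 120° about `0` of the sector `m ≥ 0, m + k > 0` cover all
  nonzero lattice points, and every lattice point of this sector is at least as close to `x` as to
  `0`. Likewise the rotations about `c` of the sector `k ≤ 0, m + k ≤ 0` cover the lattice, and every
  lattice point of it is at least as close to `x` as to `c`. The sectors are disjoint, since the
  sign of `m + k` separates them, so the disk around `x` contains at least a third of the nonzero
  lattice points of the disk around `0`, plus a third of those of the disk around `c`
  (`ncard_le_of_reduced`).
-/

/-- The point (a, b) of the Euclidean plane. -/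
noncomputable def pt (a b : ℝ) : EuclideanSpace ℝ (Fin 2) :=
  (WithLp.equiv 2 (Fin 2 → ℝ)).symm ![a, b]

/-- The triangular lattice of side `l`: integer combinations of
`u = ((3/2)l, (√3/2)l)` and `v = ((3/2)l, −(√3/2)l)`.  The origin is a lattice point. -/
noncomputable def triLattice (l : ℝ) : Set (EuclideanSpace ℝ (Fin 2)) :=
  { p | ∃ m k : ℤ, p = (m : ℝ) • pt (3 / 2 * l) (Real.sqrt 3 / 2 * l)
                     + (k : ℝ) • pt (3 / 2 * l) (-(Real.sqrt 3 / 2 * l)) }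

/-- `latticeDiskCount l R` is the number of points of the triangular lattice of side `l`
contained in the closed disk of radius `R` centered at a lattice point (here the origin;
by the symmetry of the lattice the number does not depend on this choice). -/
noncomputable def latticeDiskCount (l R : ℝ) : ℕ :=
  (triLattice l ∩ Metric.closedBall 0 R).ncard

/-- The quadratic form of the triangular lattice, normalised so that its minimum on nonzero integer
vectors is 1. -/
def hexForm (a b : ℝ) : ℝ := a ^ 2 + a * b + b ^ 2

/-- The integer coordinates of the lattice points in the disk centred at the point with coordinates
`(s, t)`; the parameter `ρ` is the squared radius divided by the squared lattice spacing. -/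
def coordDisk (s t ρ : ℝ) : Set (ℤ × ℤ) := {p | hexForm (p.1 - s) (p.2 - t) ≤ ρ}

lemma coordDisk_finite (s t ρ : ℝ) : (coordDisk s t ρ).Finite := by
  -- `hexForm a b ≥ (3/4) a²`, hence `|a| ≤ 2 (1 + ρ)` crudely, and the same holds for `b`.
  have key : ∀ a b : ℝ, hexForm a b ≤ ρ → |a| ≤ 2 * (1 + ρ) ∧ |b| ≤ 2 * (1 + ρ) := by
    intro a b h
    unfold hexForm at h
    refine ⟨abs_le.2 ⟨?_, ?_⟩, abs_le.2 ⟨?_, ?_⟩⟩ <;>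
    nlinarith [sq_nonneg (a + 2 * b), sq_nonneg (b + 2 * a), sq_nonneg (a + 1),
      sq_nonneg (a - 1), sq_nonneg (b + 1), sq_nonneg (b - 1)]
  refine ((Set.finite_Icc ⌈s - 2 * (1 + ρ)⌉ ⌊s + 2 * (1 + ρ)⌋).prod
    (Set.finite_Icc ⌈t - 2 * (1 + ρ)⌉ ⌊t + 2 * (1 + ρ)⌋)).subset ?_
  rintro ⟨m, k⟩ h
  obtain ⟨h1, h2⟩ := key _ _ h
  rw [abs_le] at h1 h2
  simp only [Set.mem_prod, Set.mem_Icc, Int.ceil_le, Int.le_floor]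
  refine ⟨⟨?_, ?_⟩, ?_, ?_⟩ <;> linarith

lemma ncard_le_of_subset_three_images {α : Type*} {S A B C : Set α} (f g h : α → α)
    (hA : A.Finite) (hB : B.Finite) (hC : C.Finite)
    (hS : S ⊆ f '' A ∪ g '' B ∪ h '' C) : S.ncard ≤ A.ncard + B.ncard + C.ncard := by
  have h0 := Set.ncard_le_ncard hS (((hA.image f).union (hB.image g)).union (hC.image h))
  have h1 := Set.ncard_union_le (f '' A ∪ g '' B) (h '' C)
  have h2 := Set.ncard_union_le (f '' A) (g '' B)
  have h3 := Set.ncard_image_le (f := f) hA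
  have h4 := Set.ncard_image_le (f := g) hB
  have h5 := Set.ncard_image_le (f := h) hC
  omega

/-- The lattice points other than `0` of the disk about `0` lying in a half-open sector of angle
120° with apex `0`. -/
def vertexSector (ρ : ℝ) : Set (ℤ × ℤ) := {p ∈ coordDisk 0 0 ρ | 0 ≤ p.1 ∧ 0 < p.1 + p.2}

/-- The lattice points of the disk about the triangle centre `(1/3, 1/3)` lying in a sector of angle
120° whose apex is that centre. The strict inequalities `p.2 < 1/3` and `p.1 + p.2 < 2/3` bounding
the sector are rounded to integers. -/
def centerSector (ρ : ℝ) : Set (ℤ × ℤ) :=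
  {p ∈ coordDisk (1 / 3) (1 / 3) ρ | p.2 ≤ 0 ∧ p.1 + p.2 ≤ 0}

lemma vertexSector_finite (ρ : ℝ) : (vertexSector ρ).Finite :=
  (coordDisk_finite 0 0 ρ).subset (Set.sep_subset _ _)

lemma centerSector_finite (ρ : ℝ) : (centerSector ρ).Finite :=
  (coordDisk_finite (1 / 3) (1 / 3) ρ).subset (Set.sep_subset _ _)

/-- The sector about `0` and its rotations by ±120°, which are the two nontrivial maps below, cover
all nonzero lattice points. -/
lemma ncard_zero_le (ρ : ℝ) : (coordDisk 0 0 ρ).ncard ≤ 3 * (vertexSector ρ).ncard + 1 := by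
  have hfin := vertexSector_finite ρ
  have h1 : (coordDisk 0 0 ρ \ {(0, 0)}).ncard ≤ _ :=
    ncard_le_of_subset_three_images id (fun p => (-(p.1 + p.2), p.1))
      (fun p => (p.2, -(p.1 + p.2))) hfin hfin hfin (by
      rintro ⟨m, k⟩ ⟨h, hne⟩
      have hne' : ¬ (m = 0 ∧ k = 0) := by simpa using hne
      simp only [coordDisk, hexForm, Set.mem_ofPred_eq] at h
      -- Among `-(m + k)`, `m`, `k`, in cyclic order, a negative entry is followed by a
      -- nonnegative one, because the sum is zero and not all three vanish.
      have hc : (0 ≤ m ∧ 0 < m + k) ∨ (0 ≤ k ∧ m < 0) ∨ (m + k ≤ 0 ∧ k < 0) := by omega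
      rcases hc with hc | hc | hc
      · exact Or.inl (Or.inl ⟨(m, k), ⟨h, hc.1, hc.2⟩, rfl⟩)
      · refine Or.inl (Or.inr ⟨(k, -(m + k)), ⟨?_, ?_, ?_⟩, ?_⟩)
        · simp only [coordDisk, hexForm, Set.mem_ofPred_eq]
          push_cast
          linarith
        · exact hc.1
        · simp only
          omega
        · ext <;> simp
      · refine Or.inr ⟨(-(m + k), m), ⟨?_, ?_, ?_⟩, ?_⟩
        · simp only [coordDisk, hexForm, Set.mem_ofPred_eq]
          push_cast
          linarith
        · simp only
          omega
        · simp only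
          omega
        · ext <;> simp)
  have h2 := Set.ncard_le_ncard_sdiff_add_ncard (coordDisk 0 0 ρ) {((0 : ℤ), (0 : ℤ))}
  rw [Set.ncard_singleton] at h2
  omega

/-- The sector about the triangle centre and its rotations by ±120° about that centre, which
permute the barycentric coordinates `1 - m - k, m, k` cyclically, cover the lattice. -/
lemma ncard_center_le (ρ : ℝ) :
    (coordDisk (1 / 3) (1 / 3) ρ).ncard ≤ 3 * (centerSector ρ).ncard := by
  have hfin := centerSector_finite ρ
  have h1 : (coordDisk (1 / 3) (1 / 3) ρ).ncard ≤ _ :=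
    ncard_le_of_subset_three_images id (fun p => (1 - p.1 - p.2, p.1))
      (fun p => (p.2, 1 - p.1 - p.2)) hfin hfin hfin (by
      rintro ⟨m, k⟩ h
      simp only [coordDisk, hexForm, Set.mem_ofPred_eq] at h
      -- Integers with sum 1 are neither all positive nor all nonpositive, so in cyclic order some
      -- nonpositive entry is followed by a positive one.
      have hc : (k ≤ 0 ∧ m + k ≤ 0) ∨ (1 ≤ m + k ∧ 0 < m) ∨ (m ≤ 0 ∧ 0 < k) := by omega
      rcases hc with hc | hc | hc
      · exact Or.inl (Or.inl ⟨(m, k), ⟨h, hc.1, hc.2⟩, rfl⟩)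
      · refine Or.inl (Or.inr ⟨(k, 1 - m - k), ⟨?_, ?_, ?_⟩, ?_⟩)
        · simp only [coordDisk, hexForm, Set.mem_ofPred_eq]
          push_cast
          linarith
        · simp only
          omega
        · simp only
          omega
        · ext <;> simp
      · refine Or.inr ⟨(1 - m - k, m), ⟨?_, ?_, ?_⟩, ?_⟩
        · simp only [coordDisk, hexForm, Set.mem_ofPred_eq]
          push_cast
          linarith
        · exact hc.1
        · simp only
          omega
        · ext <;> simp
          ring)
  omega

/-- The map `(m, k) ↦ (m - k, m + 2 k)` multiplies `hexForm` by 3 and sends `(1/3, 1/3)` to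
`(0, 1)`. It carries the disk about `0` onto the points `(i, j)` with `3 ∣ j - i`, and, after
subtracting `(0, 1)`, the disk about `(1/3, 1/3)` onto those with `j - i ≡ 2 mod 3`; the
points with `j - i ≡ 1 mod 3` are the negatives of the latter. -/
lemma ncard_three_mul_le (ρ : ℝ) : (coordDisk 0 0 (3 * ρ)).ncard ≤
    (coordDisk 0 0 ρ).ncard + 2 * (coordDisk (1 / 3) (1 / 3) ρ).ncard := by
  have h1 : (coordDisk 0 0 (3 * ρ)).ncard ≤ _ :=
    ncard_le_of_subset_three_images (fun p => (p.1 - p.2, p.1 + 2 * p.2))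
      (fun p => (p.1 - p.2, p.1 + 2 * p.2 - 1)) (fun p => (p.2 - p.1, 1 - p.1 - 2 * p.2))
      (coordDisk_finite 0 0 ρ) (coordDisk_finite (1 / 3) (1 / 3) ρ)
      (coordDisk_finite (1 / 3) (1 / 3) ρ) (by
      rintro ⟨i, j⟩ h
      simp only [coordDisk, hexForm, Set.mem_ofPred_eq] at h
      have hc : (∃ k, j = i + 3 * k) ∨ (∃ k, j = i + 3 * k - 1) ∨ (∃ k, j = i - 3 * k + 1) := by
        have : (j - i) % 3 = 0 ∨ (j - i) % 3 = 2 ∨ (j - i) % 3 = 1 := by omega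
        rcases this with h | h | h
        · exact Or.inl ⟨(j - i) / 3, by omega⟩
        · exact Or.inr (Or.inl ⟨(j - i + 1) / 3, by omega⟩)
        · exact Or.inr (Or.inr ⟨(i - j + 1) / 3, by omega⟩)
      rcases hc with ⟨k, rfl⟩ | ⟨k, rfl⟩ | ⟨k, rfl⟩ <;> push_cast at h
      · refine Or.inl (Or.inl ⟨(i + k, k), ?_, ?_⟩)
        · simp only [coordDisk, hexForm, Set.mem_ofPred_eq]
          push_cast
          linarith
        · ext <;> simp
          ring
      · refine Or.inl (Or.inr ⟨(i + k, k), ?_, ?_⟩)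
        · simp only [coordDisk, hexForm, Set.mem_ofPred_eq]
          push_cast
          linarith
        · ext <;> simp
          ring
      · refine Or.inr ⟨(k - i, k), ?_, ?_⟩
        · simp only [coordDisk, hexForm, Set.mem_ofPred_eq]
          push_cast
          linarith
        · ext <;> simp
          ring)
  omega

/-- For a centre in the triangle with vertices `0`, `u / 2`, `(u + v) / 3`, the disk contains the
two disjoint sectors. -/
lemma ncard_le_of_reduced {s t : ℝ} (ρ : ℝ) (ht : 0 ≤ t) (hts : t ≤ s) (hst : 2 * s + t ≤ 1) :
    (vertexSector ρ).ncard + (centerSector ρ).ncard ≤ (coordDisk s t ρ).ncard := by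
  have hdisj : Disjoint (vertexSector ρ) (centerSector ρ) := by
    rw [Set.disjoint_left]
    rintro ⟨m, k⟩ ⟨_, h1, h2⟩ ⟨_, h3, h4⟩
    exact absurd h2 (not_lt.2 h4)
  rw [← Set.ncard_union_eq hdisj (vertexSector_finite ρ) (centerSector_finite ρ)]
  refine Set.ncard_le_ncard (Set.union_subset ?_ ?_) (coordDisk_finite s t ρ)
  · rintro ⟨m, k⟩ ⟨h, h1, h2⟩
    simp only [coordDisk, hexForm, Set.mem_ofPred_eq] at h h1 h2 ⊢
    have h1' : (0 : ℝ) ≤ m := by exact_mod_cast h1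
    have h2' : (1 : ℝ) ≤ m + k := by exact_mod_cast h2
    -- The cross term is `(s - t) (2 m + k) + 3 t (m + k) ≥ (s - t) + 3 t`.
    have e1 : 0 ≤ (s - t) * (2 * m + k - 1) := mul_nonneg (by linarith) (by linarith)
    have e2 : 0 ≤ t * (m + k - 1) := mul_nonneg ht (by linarith)
    have e3 : s ^ 2 + s * t + t ^ 2 ≤ s + 2 * t := by nlinarith
    nlinarith
  · rintro ⟨m, k⟩ ⟨h, h1, h2⟩
    simp only [coordDisk, hexForm, Set.mem_ofPred_eq] at h h1 h2 ⊢
    have h1' : (k : ℝ) ≤ 0 := by exact_mod_cast h1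
    have h2' : (m : ℝ) + k ≤ 0 := by exact_mod_cast h2
    -- The difference of the two forms is affine in `(m, k)` with these two products as linear
    -- part; its value at `(0, 0)` is controlled by `e3`.
    have e1 : 0 ≤ (1 - 2 * s - t) * (-(m + k)) := mul_nonneg (by linarith) (by linarith)
    have e2 : 0 ≤ (s - t) * (-k) := mul_nonneg (by linarith) (by linarith)
    have e3 : s ^ 2 + s * t + t ^ 2 ≤ 1 / 3 := by nlinarith
    nlinarith

lemma ncard_le_of_isometry {s t s' t' : ℝ} (ρ : ℝ) (f : ℤ × ℤ → ℤ × ℤ)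
    (hf : Function.Injective f)
    (h : ∀ p : ℤ × ℤ, hexForm ((f p).1 - s) ((f p).2 - t) = hexForm (p.1 - s') (p.2 - t')) :
    (coordDisk s' t' ρ).ncard ≤ (coordDisk s t ρ).ncard := by
  rw [← Set.ncard_image_of_injective _ hf]
  refine Set.ncard_le_ncard ?_ (coordDisk_finite s t ρ)
  rintro _ ⟨p, hp, rfl⟩
  simpa only [coordDisk, Set.mem_ofPred_eq, h p] using hp

/-- The reflection of the triangle `0, u, v` exchanging `u` and `v`. -/
lemma ncard_swap_le (s t ρ : ℝ) : (coordDisk t s ρ).ncard ≤ (coordDisk s t ρ).ncard :=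
  ncard_le_of_isometry ρ Prod.swap Prod.swap_injective (fun p => by
    simp only [hexForm, Prod.fst_swap, Prod.snd_swap]
    ring)

/-- The reflection of the triangle `0, u, v` exchanging `0` and `u`. -/
lemma ncard_reflect_le (s t ρ : ℝ) :
    (coordDisk (1 - s - t) t ρ).ncard ≤ (coordDisk s t ρ).ncard :=
  ncard_le_of_isometry ρ (fun p => (1 - p.1 - p.2, p.2))
    (by
      rintro ⟨a, b⟩ ⟨c, d⟩ h
      simp only [Prod.mk.injEq] at h ⊢
      omega)
    (fun p => by
      simp only [hexForm]
      push_cast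
      ring)

/-- The point reflection exchanging the triangles `0, u, v` and `u + v, v, u`. -/
lemma ncard_neg_le (s t ρ : ℝ) :
    (coordDisk (1 - s) (1 - t) ρ).ncard ≤ (coordDisk s t ρ).ncard :=
  ncard_le_of_isometry ρ (fun p => (1 - p.1, 1 - p.2))
    (by
      rintro ⟨a, b⟩ ⟨c, d⟩ h
      simp only [Prod.mk.injEq] at h ⊢
      omega)
    (fun p => by
      simp only [hexForm]
      push_cast
      ring)

lemma ncard_fract_le (s t ρ : ℝ) :
    (coordDisk (Int.fract s) (Int.fract t) ρ).ncard ≤ (coordDisk s t ρ).ncard :=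
  ncard_le_of_isometry ρ (fun p => (p.1 + ⌊s⌋, p.2 + ⌊t⌋))
    (by
      rintro ⟨a, b⟩ ⟨c, d⟩ h
      simp only [Prod.mk.injEq] at h ⊢
      omega)
    (fun p => by
      simp only [hexForm, Int.fract]
      push_cast
      ring)

/-- Every centre can be moved by symmetries of the lattice into the triangle with vertices `0`,
`u / 2`, `(u + v) / 3`: first into the triangle `0, u, v`, then so that the barycentric coordinates
satisfy `1 - s - t ≥ s ≥ t`. -/
lemma exists_reduced (s t : ℝ) : ∃ s' t' : ℝ, 0 ≤ t' ∧ t' ≤ s' ∧ 2 * s' + t' ≤ 1 ∧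
    ∀ ρ, (coordDisk s' t' ρ).ncard ≤ (coordDisk s t ρ).ncard := by
  have htri : ∀ a b : ℝ, 0 ≤ a → 0 ≤ b → a + b ≤ 1 → ∃ s' t' : ℝ,
      0 ≤ t' ∧ t' ≤ s' ∧ 2 * s' + t' ≤ 1 ∧
      ∀ ρ, (coordDisk s' t' ρ).ncard ≤ (coordDisk a b ρ).ncard := by
    have hord : ∀ a b : ℝ, 0 ≤ b → b ≤ a → a + b ≤ 1 → ∃ s' t' : ℝ,
        0 ≤ t' ∧ t' ≤ s' ∧ 2 * s' + t' ≤ 1 ∧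
        ∀ ρ, (coordDisk s' t' ρ).ncard ≤ (coordDisk a b ρ).ncard := by
      intro a b hb hab hsum
      by_cases h1 : 2 * a + b ≤ 1
      · exact ⟨a, b, hb, hab, h1, fun ρ => le_rfl⟩
      by_cases h2 : b ≤ 1 - a - b
      · exact ⟨1 - a - b, b, hb, h2, by linarith, fun ρ => ncard_reflect_le a b ρ⟩
      · exact ⟨b, 1 - a - b, by linarith, by linarith, by linarith, fun ρ =>
          (ncard_swap_le _ _ ρ).trans (ncard_reflect_le a b ρ)⟩
    intro a b ha hb hsum
    rcases le_total b a with h | h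
    · exact hord a b hb h hsum
    · obtain ⟨s', t', h1, h2, h3, h4⟩ := hord b a ha h (by linarith)
      exact ⟨s', t', h1, h2, h3, fun ρ => (h4 ρ).trans (ncard_swap_le a b ρ)⟩
  have hs0 := Int.fract_nonneg s
  have ht0 := Int.fract_nonneg t
  have hs1 := (Int.fract_lt_one s).le
  have ht1 := (Int.fract_lt_one t).le
  rcases le_total (Int.fract s + Int.fract t) 1 with h | h
  · obtain ⟨s', t', h1, h2, h3, h4⟩ := htri _ _ hs0 ht0 h
    exact ⟨s', t', h1, h2, h3, fun ρ => (h4 ρ).trans (ncard_fract_le s t ρ)⟩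
  · obtain ⟨s', t', h1, h2, h3, h4⟩ := htri (1 - Int.fract s) (1 - Int.fract t)
      (by linarith) (by linarith) (by linarith)
    exact ⟨s', t', h1, h2, h3, fun ρ =>
      (h4 ρ).trans ((ncard_neg_le _ _ ρ).trans (ncard_fract_le s t ρ))⟩

/-- The point with coordinates `(a, b)` in the basis `u, v` of the lattice. -/
noncomputable def latPt (l a b : ℝ) : EuclideanSpace ℝ (Fin 2) :=
  a • pt (3 / 2 * l) (Real.sqrt 3 / 2 * l) + b • pt (3 / 2 * l) (-(Real.sqrt 3 / 2 * l))

lemma latPt_zero (l a b : ℝ) : latPt l a b 0 = 3 / 2 * l * (a + b) := by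
  simp [latPt, pt]
  ring

lemma latPt_one (l a b : ℝ) : latPt l a b 1 = Real.sqrt 3 / 2 * l * (a - b) := by
  simp [latPt, pt]
  ring

lemma dist_latPt_sq (l a b c d : ℝ) :
    dist (latPt l a b) (latPt l c d) ^ 2 = 3 * l ^ 2 * hexForm (a - c) (b - d) := by
  rw [EuclideanSpace.dist_eq, Real.sq_sqrt (Finset.sum_nonneg fun i _ => sq_nonneg _)]
  simp only [Fin.sum_univ_two, Real.dist_eq, sq_abs, latPt_zero, latPt_one, hexForm]
  have h3 : Real.sqrt 3 ^ 2 = 3 := Real.sq_sqrt (by norm_num)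
  linear_combination (1 / 4) * l ^ 2 * (a - b - (c - d)) ^ 2 * h3

lemma exists_latPt {l : ℝ} (hl : 0 < l) (x : EuclideanSpace ℝ (Fin 2)) :
    ∃ s t : ℝ, x = latPt l s t := by
  have h3 : Real.sqrt 3 ≠ 0 := by positivity
  have hl' : l ≠ 0 := hl.ne'
  refine ⟨x 0 / (3 * l) + x 1 / (Real.sqrt 3 * l), x 0 / (3 * l) - x 1 / (Real.sqrt 3 * l), ?_⟩
  ext i
  fin_cases i
  · simp only [Fin.zero_eta, latPt_zero]
    field_simp
    ring
  · simp only [Fin.mk_one, latPt_one]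
    field_simp
    ring

lemma ncard_triLattice_inter {l R : ℝ} (hl : 0 < l) (hR : 0 ≤ R) (s t : ℝ) :
    (triLattice l ∩ Metric.closedBall (latPt l s t) R).ncard =
      (coordDisk s t (R ^ 2 / (3 * l ^ 2))).ncard := by
  have hmem : ∀ a b : ℝ, latPt l a b ∈ Metric.closedBall (latPt l s t) R ↔
      hexForm (a - s) (b - t) ≤ R ^ 2 / (3 * l ^ 2) := by
    intro a b
    rw [Metric.mem_closedBall, le_div_iff₀ (by positivity), mul_comm, ← dist_latPt_sq,
      sq_le_sq₀ dist_nonneg hR]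
  have himg : triLattice l ∩ Metric.closedBall (latPt l s t) R =
      (fun p : ℤ × ℤ => latPt l p.1 p.2) '' coordDisk s t (R ^ 2 / (3 * l ^ 2)) := by
    ext y
    constructor
    · rintro ⟨⟨m, k, rfl⟩, hy⟩
      exact ⟨(m, k), (hmem m k).1 hy, rfl⟩
    · rintro ⟨⟨m, k⟩, hp, rfl⟩
      exact ⟨⟨m, k, rfl⟩, (hmem m k).2 hp⟩
  have hinj : Function.Injective (fun p : ℤ × ℤ => latPt l p.1 p.2) := by
    rintro ⟨a, b⟩ ⟨c, d⟩ h
    have h0 := congrArg (fun y : EuclideanSpace ℝ (Fin 2) => y 0) h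
    have h1 := congrArg (fun y : EuclideanSpace ℝ (Fin 2) => y 1) h
    simp only [latPt_zero, latPt_one] at h0 h1
    have e0 := mul_left_cancel₀ (by positivity) h0
    have e1 := mul_left_cancel₀ (by positivity) h1
    have ea : (a : ℝ) = c := by linarith
    have eb : (b : ℝ) = d := by linarith
    exact Prod.ext (by exact_mod_cast ea) (by exact_mod_cast eb)
  rw [himg, Set.ncard_image_of_injective _ hinj]

lemma latticeDiskCount_eq {l R : ℝ} (hl : 0 < l) (hR : 0 ≤ R) :
    latticeDiskCount l R = (coordDisk 0 0 (R ^ 2 / (3 * l ^ 2))).ncard := by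
  have h0 : latPt l 0 0 = 0 := by simp [latPt]
  rw [← ncard_triLattice_inter hl hR, h0, latticeDiskCount]

/-- A triangular-lattice deployment of sensors of sensing radius `Rs ≥ l` achieves a
continuous coverage level of at least `(n(Rs) − 1)/3 + (n(√3·Rs) − n(Rs))/6`: every point
of the plane lies within distance `Rs` of at least that many lattice points. -/
theorem triLattice_continuous_coverage_level (l Rs : ℝ) (hl : 0 < l) (hlRs : l ≤ Rs)
    (x : EuclideanSpace ℝ (Fin 2)) :
    ((latticeDiskCount l Rs : ℝ) - 1) / 3 +
      ((latticeDiskCount l (Real.sqrt 3 * Rs) : ℝ) - (latticeDiskCount l Rs : ℝ)) / 6 ≤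
      ((triLattice l ∩ Metric.closedBall x Rs).ncard : ℝ) := by
  have hR : 0 ≤ Rs := hl.le.trans hlRs
  obtain ⟨s, t, rfl⟩ := exists_latPt hl x
  have hscale : (Real.sqrt 3 * Rs) ^ 2 / (3 * l ^ 2) = 3 * (Rs ^ 2 / (3 * l ^ 2)) := by
    rw [mul_pow, Real.sq_sqrt (by norm_num : (0 : ℝ) ≤ 3), mul_div_assoc]
  rw [latticeDiskCount_eq hl hR, latticeDiskCount_eq hl (by positivity), hscale,
    ncard_triLattice_inter hl hR]
  generalize Rs ^ 2 / (3 * l ^ 2) = ρ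
  obtain ⟨s', t', ht, hts, hst, hle⟩ := exists_reduced s t
  have h1 := (ncard_le_of_reduced ρ ht hts hst).trans (hle ρ)
  have h2 := ncard_zero_le ρ
  have h3 := ncard_center_le ρ
  have h4 := ncard_three_mul_le ρ
  have key : (coordDisk 0 0 ρ).ncard + (coordDisk 0 0 (3 * ρ)).ncard ≤
      6 * (coordDisk s t ρ).ncard + 2 := by omega
  have key' : ((coordDisk 0 0 ρ).ncard : ℝ) + (coordDisk 0 0 (3 * ρ)).ncard ≤
      6 * (coordDisk s t ρ).ncard + 2 := by exact_mod_cast key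
  linarith
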